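/- Let n ≥ 3. A tree with boundary G has the Faber-Krahn property in the class T^{(n,·)} of all trees with boundary with n vertices (with arbitrary number of interior vertices) if and only if G is a path with n vertices, and G is then uniquely determined up to isomorphism. -/

import Mathlib

/-!
The path is optimal because of a weighted Cauchy-Schwarz inequality on the edges. Let `N = n - 1`
and `θ = π / N`; then `2 - 2 cos θ` is an eigenvalue of the path, with eigenfunction `sin (k θ)`
(`path_eigenpair`). It has to be shown that every Dirichlet eigenvalue of a tree on `n` vertices
is at least `2 - 2 cos θ`, and strictly larger when some vertex has degree at least three
(`eigenvalue_bound`).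

Root the tree at a leaf `r`, let `s(v)` be the number of vertices of the subtree hanging at `v`,
and put `q(k) = sin ((k - 1) θ) / sin (k θ)`. If `c` is a child of `v`, use on the edge `v c` the
inequality `2 f(v) f(c) ≤ q(s(c)) f(v)² + q(s(c))⁻¹ f(c)²`. Summing over the edges bounds
`⟨Δ f, f⟩` below by a diagonal form, whose coefficient at an interior vertex `v` with children
`c₁, …, c_j` is `(j + 1) - ∑ q(s(cᵢ)) - q(s(v))⁻¹`. As `s(v) = 1 + ∑ s(cᵢ)` and
`q(k + 1)⁻¹ = 2 cos θ - q(k)`, this coefficient equals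
`2 - 2 cos θ + (∑ (1 - q(s(cᵢ))) - (1 - q(∑ s(cᵢ))))`, so the bound follows from the subadditivity
of `1 - q`, which is strict for `j ≥ 2` (`ratio_sum_le`, `ratio_sum_lt`). If the bound is attained,
then an eigenfunction vanishes at every branching vertex, and by the equality case of the edge
inequalities its zeros spread over the whole tree.

Finally, the Dirichlet spectrum is finite and nonempty, so the infimum defining `λ(G)` is attained
(`dirichletLambda_mem`), and a tree without branching vertices is a path, by sending a vertex to
its distance from a leaf (`iso_path_of_degree_le_two`).
-/

/-!
Common definitions for Faber-Krahn type inequalities for trees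
(Bıyıkoğlu–Leydold, "Faber-Krahn Type Inequalities for Trees").

A *tree (graph) with boundary* is a finite simple connected graph in which
boundary vertices are exactly the vertices of degree 1 and interior vertices
are the vertices of degree ≥ 2; both sets are required to be nonempty.
The Dirichlet operator is the Laplacian restricted to functions vanishing on
the boundary; `dirichletLambda` is its smallest eigenvalue.
-/

open Finset
open scoped Classical

noncomputable section

namespace FK

variable {V : Type*} [Fintype V] [DecidableEq V]

/-- A vertex is a boundary vertex iff it has degree `1`. -/
def IsBoundary (G : SimpleGraph V) (v : V) : Prop := G.degree v = 1

/-- A vertex is an interior vertex iff it has degree at least `2`. -/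
def IsInterior (G : SimpleGraph V) (v : V) : Prop := 2 ≤ G.degree v

/-- A tree with boundary: a tree with at least one interior and
one boundary vertex. -/
def IsTreeWithBoundary (G : SimpleGraph V) : Prop :=
  G.IsTree ∧ (∃ v, IsInterior G v) ∧ (∃ v, IsBoundary G v)

/-- A connected graph with boundary: every vertex is either a boundary vertex
(degree 1) or an interior vertex (degree ≥ 2), both kinds occur, and no edge
joins two boundary vertices. -/
def IsGraphWithBoundary (G : SimpleGraph V) : Prop :=
  G.Connected ∧ (∀ v, IsBoundary G v ∨ IsInterior G v) ∧
    (∃ v, IsInterior G v) ∧ (∃ v, IsBoundary G v) ∧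
    (∀ v w, G.Adj v w → IsBoundary G v → ¬ IsBoundary G w)

/-- The finset of interior vertices. -/
def interiorFinset (G : SimpleGraph V) : Finset V := univ.filter (fun v => IsInterior G v)

/-- The finset of boundary vertices. -/
def boundaryFinset (G : SimpleGraph V) : Finset V := univ.filter (fun v => IsBoundary G v)

/-- The degree sequence of `G`, as a multiset. -/
def degreeMultiset (G : SimpleGraph V) : Multiset ℕ := Finset.univ.val.map (fun v => G.degree v)

/-- The graph Laplacian `Δ = D - A` applied to a function `f : V → ℝ`. -/
def lapApply (G : SimpleGraph V) (f : V → ℝ) (v : V) : ℝ :=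
  (G.degree v : ℝ) * f v - ∑ w ∈ G.neighborFinset v, f w

/-- `f` (vanishing on the boundary, nonzero) is an eigenfunction of the
Dirichlet operator `Δ₀` with eigenvalue `μ`: the eigenvalue equation holds at
every interior vertex. -/
def IsDirichletEigenpair (G : SimpleGraph V) (μ : ℝ) (f : V → ℝ) : Prop :=
  f ≠ 0 ∧ (∀ v, IsBoundary G v → f v = 0) ∧
    ∀ v, IsInterior G v → lapApply G f v = μ * f v

/-- The first (smallest) Dirichlet eigenvalue `λ(G)`. -/
def dirichletLambda (G : SimpleGraph V) : ℝ :=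
  sInf {μ : ℝ | ∃ f : V → ℝ, IsDirichletEigenpair G μ f}

/-- The quadratic form `⟨Δ f, f⟩ = Σ_{(u,v)∈E} (f u - f v)²` of the Laplacian
(each edge counted once). -/
def quadForm (G : SimpleGraph V) (f : V → ℝ) : ℝ :=
  (∑ v, ∑ w ∈ G.neighborFinset v, (f v - f w) ^ 2) / 2

/-- The Rayleigh quotient `R_G(f)`. -/
def rayleigh (G : SimpleGraph V) (f : V → ℝ) : ℝ :=
  quadForm G f / ∑ v, f v ^ 2

/-- `w` is a child of `v` in the tree `G` rooted at `v₀`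
(heights are distances from the root `v₀`). -/
def IsChild (G : SimpleGraph V) (v₀ v w : V) : Prop :=
  G.Adj v w ∧ G.dist v₀ w = G.dist v₀ v + 1

/-- A spiral-like ordering (SLO-ordering) of the vertices of the tree `G`
rooted at `v₀`: a (strict) well-ordering `lt` satisfying (S1)-(S3). -/
def IsSLOOrdering (G : SimpleGraph V) (v₀ : V) (lt : V → V → Prop) : Prop :=
  IsStrictTotalOrder V lt ∧
  (∀ v w, lt v w → G.dist v₀ v ≤ G.dist v₀ w) ∧
  (∀ v₁ v₂ w₁ w₂, lt v₁ v₂ → IsChild G v₀ v₁ w₁ → IsChild G v₀ v₂ w₂ → lt w₁ w₂) ∧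
  (∀ v w, lt v w → IsBoundary G v → IsBoundary G w)

/-- A spiral-like ordering with increasing degrees (SLO*-ordering):
additionally (S4). -/
def IsSLOStarOrdering (G : SimpleGraph V) (v₀ : V) (lt : V → V → Prop) : Prop :=
  IsSLOOrdering G v₀ lt ∧
  ∀ v w, lt v w → IsInterior G v → IsInterior G w → G.degree v ≤ G.degree w

/-- An SLO-tree: a tree with boundary admitting an SLO-ordering. -/
def IsSLOTree (G : SimpleGraph V) : Prop :=
  IsTreeWithBoundary G ∧ ∃ (v₀ : V) (lt : V → V → Prop), IsSLOOrdering G v₀ lt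

/-- An SLO*-tree: a tree with boundary admitting an SLO*-ordering. -/
def IsSLOStarTree (G : SimpleGraph V) : Prop :=
  IsTreeWithBoundary G ∧ ∃ (v₀ : V) (lt : V → V → Prop), IsSLOStarOrdering G v₀ lt

end FK

namespace FK

/-! ### Trigonometric inequalities -/

/-- The ratio `q(k) = sin ((k - 1) θ) / sin (k θ)` of consecutive values of the first Dirichlet
eigenfunction of a path. Where `sin (k θ) = 0` it has the value `0`. -/
def ratio (θ : ℝ) (k : ℕ) : ℝ := Real.sin (((k : ℝ) - 1) * θ) / Real.sin (k * θ)

lemma sin_mul_pos {N k : ℕ} {θ : ℝ} (hθ : 0 < θ) (hN : N * θ = Real.pi) (h1 : 1 ≤ k)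
    (h2 : k < N) : 0 < Real.sin (k * θ) := by
  have hr1 : (1 : ℝ) ≤ k := by exact_mod_cast h1
  have hr2 : (k : ℝ) < N := by exact_mod_cast h2
  apply Real.sin_pos_of_pos_of_lt_pi
  · nlinarith
  · nlinarith

lemma ratio_nonneg {N k : ℕ} {θ : ℝ} (hθ : 0 < θ) (hN : N * θ = Real.pi) (h1 : 1 ≤ k)
    (h2 : k ≤ N) : 0 ≤ ratio θ k := by
  have hr1 : (1 : ℝ) ≤ k := by exact_mod_cast h1
  have hr2 : (k : ℝ) ≤ N := by exact_mod_cast h2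
  apply div_nonneg <;> apply Real.sin_nonneg_of_nonneg_of_le_pi <;> nlinarith

lemma ratio_pos {N k : ℕ} {θ : ℝ} (hθ : 0 < θ) (hN : N * θ = Real.pi) (h1 : 2 ≤ k)
    (h2 : k < N) : 0 < ratio θ k := by
  apply div_pos
  · have := sin_mul_pos (k := k - 1) hθ hN (by omega) (by omega)
    rwa [Nat.cast_sub (by omega), Nat.cast_one] at this
  · exact sin_mul_pos hθ hN (by omega) h2

/-- The three-term recurrence `sin ((k + 1) θ) + sin ((k - 1) θ) = 2 cos θ sin (k θ)`,
written in terms of ratios. It also holds where `sin ((k + 1) θ) = 0`. -/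
lemma ratio_succ_inv {N k : ℕ} {θ : ℝ} (hθ : 0 < θ) (hN : N * θ = Real.pi) (h1 : 1 ≤ k)
    (h2 : k < N) : (ratio θ (k + 1))⁻¹ = 2 * Real.cos θ - ratio θ k := by
  have h := (sin_mul_pos hθ hN h1 h2).ne'
  unfold ratio
  rw [inv_div]
  push_cast
  rw [add_sub_cancel_right, add_mul, sub_mul, one_mul, Real.sin_add, Real.sin_sub]
  field_simp
  ring

lemma ratio_lt_ratio_add {N a b : ℕ} {θ : ℝ} (hθ : 0 < θ) (hN : N * θ = Real.pi) (ha : 1 ≤ a)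
    (hb : 1 ≤ b) (hab : a + b < N) : ratio θ b < ratio θ (a + b) := by
  unfold ratio
  rw [div_lt_div_iff₀ (sin_mul_pos hθ hN hb (by omega)) (sin_mul_pos hθ hN (by omega) hab)]
  have h1 := sin_mul_pos hθ hN ha (by omega)
  have h2 := sin_mul_pos (k := 1) hθ hN (by omega) (by omega)
  rw [Nat.cast_one, one_mul] at h2
  have h3 := mul_pos h1 h2
  have e1 : ((b : ℝ) - 1) * θ = b * θ - θ := by ring
  have e2 : (((a + b : ℕ) : ℝ) - 1) * θ = (a * θ + b * θ) - θ := by push_cast; ring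
  have e3 : ((a + b : ℕ) : ℝ) * θ = a * θ + b * θ := by push_cast; ring
  rw [e1, e2, e3]
  -- The difference of the two sides is `sin (a θ) * sin θ`.
  have key : Real.sin (a * θ + b * θ - θ) * Real.sin (b * θ)
      - Real.sin (b * θ - θ) * Real.sin (a * θ + b * θ) = Real.sin (a * θ) * Real.sin θ := by
    rw [Real.sin_sub, Real.sin_sub, Real.sin_add, Real.cos_add]
    linear_combination (Real.sin (a * θ) * Real.sin θ) * Real.sin_sq_add_cos_sq (b * θ)
  linarith

lemma ratio_le_one {N a : ℕ} {θ : ℝ} (hθ : 0 < θ) (hN : N * θ = Real.pi) (ha : 1 ≤ a)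
    (ha2 : 2 * a < N) : ratio θ a ≤ 1 := by
  unfold ratio
  rw [div_le_one (sin_mul_pos hθ hN ha (by omega))]
  have hr1 : (1 : ℝ) ≤ a := by exact_mod_cast ha
  have hr2 : 2 * (a : ℝ) ≤ N := by exact_mod_cast ha2.le
  apply Real.sin_le_sin_of_le_of_le_pi_div_two <;> nlinarith [Real.pi_pos]

/-- Strict subadditivity of `k ↦ 1 - ratio θ k`: only the larger of `a`, `b` can have ratio
above `1`, and `ratio θ` increases. -/
lemma ratio_add_lt {N a b : ℕ} {θ : ℝ} (hθ : 0 < θ) (hN : N * θ = Real.pi) (ha : 1 ≤ a)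
    (hb : 1 ≤ b) (hab : a + b < N) : 1 - ratio θ (a + b) < (1 - ratio θ a) + (1 - ratio θ b) := by
  rcases le_total a b with h | h
  · have := ratio_le_one hθ hN ha (by omega)
    have := ratio_lt_ratio_add hθ hN ha hb hab
    linarith
  · have := ratio_le_one hθ hN hb (by omega)
    have := ratio_lt_ratio_add hθ hN hb ha (by omega)
    rw [add_comm b a] at this
    linarith

lemma ratio_sum_le {ι : Type*} {N : ℕ} {θ : ℝ} (hθ : 0 < θ) (hN : N * θ = Real.pi) (s : ι → ℕ)
    (hs : ∀ i, 1 ≤ s i) (C : Finset ι) (hC : C.Nonempty) (hsum : ∑ i ∈ C, s i < N) :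
    1 - ratio θ (∑ i ∈ C, s i) ≤ ∑ i ∈ C, (1 - ratio θ (s i)) := by
  induction hC using Finset.Nonempty.cons_induction with
  | singleton a => simp
  | cons a C ha hC ih =>
    rw [Finset.sum_cons] at hsum ⊢
    rw [Finset.sum_cons]
    obtain ⟨c, hc⟩ := hC
    have h1 : 1 ≤ ∑ i ∈ C, s i := (hs c).trans (Finset.single_le_sum (fun i _ => Nat.zero_le _) hc)
    have := ratio_add_lt hθ hN (hs a) h1 hsum
    have := ih (by omega)
    linarith

lemma ratio_sum_lt {ι : Type*} {N : ℕ} {θ : ℝ} (hθ : 0 < θ) (hN : N * θ = Real.pi) (s : ι → ℕ)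
    (hs : ∀ i, 1 ≤ s i) (C : Finset ι) (hC : 2 ≤ C.card) (hsum : ∑ i ∈ C, s i < N) :
    1 - ratio θ (∑ i ∈ C, s i) < ∑ i ∈ C, (1 - ratio θ (s i)) := by
  obtain ⟨a, ha⟩ : C.Nonempty := Finset.card_pos.1 (by omega)
  have hD : (C.erase a).Nonempty := Finset.card_pos.1 (by rw [Finset.card_erase_of_mem ha]; omega)
  rw [← Finset.add_sum_erase C s ha] at hsum ⊢
  rw [← Finset.add_sum_erase C _ ha]
  obtain ⟨c, hc⟩ := id hD
  have h1 : 1 ≤ ∑ i ∈ C.erase a, s i :=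
    (hs c).trans (Finset.single_le_sum (fun i _ => Nat.zero_le _) hc)
  have := ratio_add_lt hθ hN (hs a) h1 hsum
  have := ratio_sum_le hθ hN s hs _ hD (by omega)
  linarith

/-! ### Subtree sizes in a tree rooted at a leaf -/

section Tree

set_option linter.unusedSectionVars false

variable {V : Type*} [Fintype V] [DecidableEq V] {G : SimpleGraph V}

/-- In a tree, the first step of a geodesic is unique. -/
lemma geodesic_step_unique (hG : G.IsTree) {v a b w : V} (ha : G.Adj v a) (hb : G.Adj v b)
    (haw : G.dist v w = G.dist a w + 1) (hbw : G.dist v w = G.dist b w + 1) : a = b := by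
  obtain ⟨p, hp⟩ := hG.connected.exists_walk_length_eq_dist a w
  obtain ⟨q, hq⟩ := hG.connected.exists_walk_length_eq_dist b w
  have hp' : (SimpleGraph.Walk.cons ha p).IsPath :=
    SimpleGraph.Walk.isPath_of_length_eq_dist _ (by simp [hp, haw])
  have hq' : (SimpleGraph.Walk.cons hb q).IsPath :=
    SimpleGraph.Walk.isPath_of_length_eq_dist _ (by simp [hq, hbw])
  have h := congrArg Subtype.val ((hG.isAcyclic.subsingleton_path v w).elim ⟨_, hp'⟩ ⟨_, hq'⟩)
  have h2 := congrArg SimpleGraph.Walk.snd h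
  simpa using h2

lemma exists_geodesic_step (hG : G.Connected) {v w : V} (h : v ≠ w) :
    ∃ a, G.Adj v a ∧ G.dist v w = G.dist a w + 1 := by
  obtain ⟨p, hp⟩ := hG.exists_walk_length_eq_dist v w
  cases p with
  | nil => exact absurd rfl h
  | @cons _ a _ hadj q =>
    refine ⟨a, hadj, ?_⟩
    rw [SimpleGraph.Walk.length_cons] at hp
    have h1 := SimpleGraph.dist_le q
    have h3 : G.dist v w ≤ G.dist v a + G.dist a w := hG.dist_triangle
    rw [SimpleGraph.dist_eq_one_iff_adj.2 hadj] at h3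
    omega

/-- The descendants of `v` (including `v`) in the tree rooted at `r`: the vertices `w` such that
`v` lies on the geodesic from `r` to `w`. -/
def desc (G : SimpleGraph V) (r v : V) : Finset V :=
  univ.filter (fun w => G.dist r w = G.dist r v + G.dist v w)

/-- The children of `v` in the tree rooted at `r`. -/
def children (G : SimpleGraph V) (r v : V) : Finset V :=
  (G.neighborFinset v).filter (fun w => G.dist r w = G.dist r v + 1)

lemma mem_children {r v c : V} :
    c ∈ children G r v ↔ G.Adj v c ∧ G.dist r c = G.dist r v + 1 := by
  simp [children]

/-- The number of vertices of the subtree hanging at `v`. -/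
def size (G : SimpleGraph V) (r v : V) : ℕ := (desc G r v).card

lemma one_le_size (r v : V) : 1 ≤ size G r v :=
  Finset.card_pos.2 ⟨v, by simp [desc]⟩

lemma size_lt_card (hG : G.IsTree) {r v : V} (h : v ≠ r) : size G r v < Fintype.card V := by
  rw [size, ← Finset.card_univ]
  apply Finset.card_lt_card
  refine Finset.ssubset_univ_iff.2 fun hw2 => ?_
  have h1 : r ∈ desc G r v := hw2 ▸ Finset.mem_univ r
  have h2 := hG.connected.pos_dist_of_ne h.symm
  simp [desc] at h1
  omega

lemma size_eq (hG : G.IsTree) (r v : V) :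
    size G r v = ∑ c ∈ children G r v, size G r c + 1 := by
  have hconn := hG.connected
  have hstep : ∀ {c w}, c ∈ children G r v → w ∈ desc G r c →
      G.dist r w = G.dist r v + G.dist v w ∧ G.dist v w = G.dist c w + 1 := by
    intro c w hc hw
    rw [mem_children] at hc
    simp only [desc, Finset.mem_filter, Finset.mem_univ, true_and] at hw
    have h1 : G.dist v w ≤ G.dist v c + G.dist c w := hconn.dist_triangle
    have h2 : G.dist r w ≤ G.dist r v + G.dist v w := hconn.dist_triangle
    rw [SimpleGraph.dist_eq_one_iff_adj.2 hc.1] at h1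
    omega
  have hdesc : desc G r v = insert v ((children G r v).biUnion (desc G r)) := by
    ext w
    simp only [Finset.mem_insert, Finset.mem_biUnion]
    constructor
    · intro hw
      simp only [desc, Finset.mem_filter, Finset.mem_univ, true_and] at hw
      by_cases hwv : w = v
      · exact Or.inl hwv
      · right
        obtain ⟨c, hadj, hc⟩ := exists_geodesic_step hconn (Ne.symm hwv)
        have h1 : G.dist r c ≤ G.dist r v + G.dist v c := hconn.dist_triangle
        have h2 : G.dist r w ≤ G.dist r c + G.dist c w := hconn.dist_triangle
        rw [SimpleGraph.dist_eq_one_iff_adj.2 hadj] at h1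
        refine ⟨c, mem_children.2 ⟨hadj, by omega⟩, ?_⟩
        simp only [desc, Finset.mem_filter, Finset.mem_univ, true_and]
        omega
    · rintro (rfl | ⟨c, hc, hw⟩)
      · simp [desc]
      · simp only [desc, Finset.mem_filter, Finset.mem_univ, true_and]
        exact (hstep hc hw).1
  rw [size, hdesc, Finset.card_insert_of_notMem, Finset.card_biUnion]
  · rfl
  · intro c hc d hd hcd
    refine Finset.disjoint_left.2 fun w hwc hwd => hcd ?_
    exact geodesic_step_unique hG (mem_children.1 hc).1 (mem_children.1 hd).1
      (hstep hc hwc).2 (hstep hd hwd).2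
  · intro h
    obtain ⟨c, hc, hw⟩ := Finset.mem_biUnion.1 h
    have := (hstep hc hw).2
    simp at this

lemma size_child_lt (hG : G.IsTree) {r v c : V} (hc : c ∈ children G r v) :
    size G r c < size G r v := by
  rw [size_eq hG r v]
  exact Nat.lt_succ_of_le (Finset.single_le_sum (f := size G r) (fun i _ => Nat.zero_le _) hc)

/-- Away from the root, the neighbours of a vertex are its children and one parent. -/
lemma exists_parent (hG : G.IsTree) {r v : V} (h : v ≠ r) :
    ∃ p, G.Adj v p ∧ G.dist r v = G.dist r p + 1 ∧ p ∉ children G r v ∧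
      G.neighborFinset v = insert p (children G r v) := by
  obtain ⟨p, hadj, hp⟩ := exists_geodesic_step hG.connected h
  rw [SimpleGraph.dist_comm, SimpleGraph.dist_comm (u := p)] at hp
  refine ⟨p, hadj, hp, fun hc => ?_, ?_⟩
  · have := (mem_children.1 hc).2
    omega
  · ext w
    simp only [SimpleGraph.mem_neighborFinset, Finset.mem_insert, mem_children]
    constructor
    · intro hw
      rcases hG.dist_eq_dist_add_one_of_adj r hw with h1 | h1
      · left
        refine geodesic_step_unique hG hw hadj (w := r) ?_ ?_
        · rw [SimpleGraph.dist_comm, SimpleGraph.dist_comm (u := w)]; exact h1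
        · rw [SimpleGraph.dist_comm, SimpleGraph.dist_comm (u := p)]; exact hp
      · exact Or.inr ⟨hw, h1⟩
    · rintro (rfl | h1)
      · exact hadj
      · exact h1.1

lemma degree_eq_card_children (hG : G.IsTree) {r v : V} (h : v ≠ r) :
    G.degree v = (children G r v).card + 1 := by
  obtain ⟨p, -, -, hp, hN⟩ := exists_parent hG h
  rw [← SimpleGraph.card_neighborFinset_eq_degree, hN, Finset.card_insert_of_notMem hp]

/-! ### The edge weights and the lower bound -/

/-- The coefficient of `f(v)²` in the edge inequality on `v w`: `q(s(w))` if `w` is a child of `v`,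
and `q(s(v))⁻¹` if `w` is its parent. It is `0` on edges at leaves, where `q` is `0` or has a zero
denominator. -/
def weight (G : SimpleGraph V) (r : V) (θ : ℝ) (v w : V) : ℝ :=
  if G.dist r w = G.dist r v + 1 then ratio θ (size G r w) else (ratio θ (size G r v))⁻¹

lemma weight_symm (hG : G.IsTree) (r : V) (θ : ℝ) {v w : V} (h : G.Adj v w) :
    weight G r θ w v = (weight G r θ v w)⁻¹ := by
  unfold weight
  rcases hG.dist_eq_dist_add_one_of_adj r h with h1 | h1
  · rw [if_pos h1, if_neg (by omega), inv_inv]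
  · rw [if_neg (by omega), if_pos h1]

section Bounds

variable {N : ℕ} {θ : ℝ} {r : V}

lemma weight_nonneg (hG : G.IsTree) (hθ : 0 < θ) (hN : N * θ = Real.pi)
    (hcard : Fintype.card V = N + 1) {v w : V} (h : G.Adj v w) : 0 ≤ weight G r θ v w := by
  have hs : ∀ u, u ≠ r → 0 ≤ ratio θ (size G r u) := fun u hu =>
    ratio_nonneg hθ hN (one_le_size r u) (by have := size_lt_card hG hu; omega)
  unfold weight
  split_ifs with h1
  · exact hs w (by rintro rfl; simp at h1)
  · refine inv_nonneg.2 (hs v ?_)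
    rintro rfl
    rw [SimpleGraph.dist_self, SimpleGraph.dist_eq_one_iff_adj.2 h] at h1
    exact h1 rfl

lemma ne_root (hr : IsBoundary G r) {v : V} (hv : IsInterior G v) : v ≠ r := by
  rintro rfl
  unfold IsBoundary at hr
  unfold IsInterior at hv
  omega

lemma weight_pos (hG : G.IsTree) (hr : IsBoundary G r) (hθ : 0 < θ) (hN : N * θ = Real.pi)
    (hcard : Fintype.card V = N + 1) {v w : V} (h : G.Adj v w) (hv : IsInterior G v)
    (hw : IsInterior G w) : 0 < weight G r θ v w := by
  have key : ∀ {v w}, G.Adj v w → IsInterior G v → IsInterior G w →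
      G.dist r w = G.dist r v + 1 → 0 < ratio θ (size G r w) := by
    intro v w h hv hw h1
    have h2 := size_child_lt hG (mem_children.2 ⟨h, h1⟩)
    have h3 := size_lt_card hG (ne_root hr hv)
    have h4 := degree_eq_card_children hG (ne_root hr hw)
    have h5 : 2 ≤ G.degree w := hw
    obtain ⟨c, hc⟩ : (children G r w).Nonempty := Finset.card_pos.1 (by omega)
    have h6 := size_child_lt hG hc
    have h7 := one_le_size (G := G) r c
    exact ratio_pos hθ hN (by omega) (by omega)
  unfold weight
  split_ifs with h1
  · exact key h hv hw h1
  · refine inv_pos.2 (key h.symm hw hv ?_)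
    rcases hG.dist_eq_dist_add_one_of_adj r h with h2 | h2
    · exact h2
    · exact absurd h2 h1

/-- The diagonal coefficient at an interior vertex, together with the bound on the subtree sizes
under which `1 - ratio θ` is subadditive. -/
lemma sum_weight_eq (hG : G.IsTree) (hr : IsBoundary G r) (hθ : 0 < θ) (hN : N * θ = Real.pi)
    (hcard : Fintype.card V = N + 1) {v : V} (hv : IsInterior G v) :
    ∑ c ∈ children G r v, size G r c < N ∧
    ∑ w ∈ G.neighborFinset v, weight G r θ v w = G.degree v - (2 - 2 * Real.cos θ)
      - (∑ c ∈ children G r v, (1 - ratio θ (size G r c))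
        - (1 - ratio θ (∑ c ∈ children G r v, size G r c))) := by
  have hvr := ne_root hr hv
  obtain ⟨p, hadj, hdist, hp, hnb⟩ := exists_parent hG hvr
  have hsz := size_eq hG r v
  have hlt := size_lt_card hG hvr
  have hdeg := degree_eq_card_children hG hvr
  have h5 : 2 ≤ G.degree v := hv
  obtain ⟨c, hc⟩ : (children G r v).Nonempty := Finset.card_pos.1 (by omega)
  have h1 : 1 ≤ ∑ c ∈ children G r v, size G r c :=
    (one_le_size (G := G) r c).trans
      (Finset.single_le_sum (f := size G r) (fun i _ => Nat.zero_le _) hc)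
  have hlt' : ∑ c ∈ children G r v, size G r c < N := by omega
  refine ⟨hlt', ?_⟩
  have hwp : weight G r θ v p = 2 * Real.cos θ - ratio θ (∑ c ∈ children G r v, size G r c) := by
    rw [weight, if_neg (by omega), hsz, ratio_succ_inv hθ hN h1 hlt']
  have hwc : ∑ w ∈ children G r v, weight G r θ v w
      = ∑ c ∈ children G r v, ratio θ (size G r c) :=
    Finset.sum_congr rfl fun w hw => by rw [weight, if_pos (mem_children.1 hw).2]
  rw [hnb, Finset.sum_insert hp, hwp, hwc, hdeg, Finset.sum_sub_distrib]
  simp only [Finset.sum_const, nsmul_eq_mul, mul_one]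
  push_cast
  ring

lemma sum_weight_le (hG : G.IsTree) (hr : IsBoundary G r) (hθ : 0 < θ) (hN : N * θ = Real.pi)
    (hcard : Fintype.card V = N + 1) {v : V} (hv : IsInterior G v) :
    ∑ w ∈ G.neighborFinset v, weight G r θ v w ≤ G.degree v - (2 - 2 * Real.cos θ) := by
  obtain ⟨hlt, h⟩ := sum_weight_eq hG hr hθ hN hcard hv
  have h4 := degree_eq_card_children hG (ne_root hr hv)
  have h5 : 2 ≤ G.degree v := hv
  have := ratio_sum_le hθ hN (size G r) (one_le_size r) (children G r v)
    (Finset.card_pos.1 (by omega)) hlt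
  linarith

lemma sum_weight_lt (hG : G.IsTree) (hr : IsBoundary G r) (hθ : 0 < θ) (hN : N * θ = Real.pi)
    (hcard : Fintype.card V = N + 1) {v : V} (hv : 3 ≤ G.degree v) :
    ∑ w ∈ G.neighborFinset v, weight G r θ v w < G.degree v - (2 - 2 * Real.cos θ) := by
  have hv' : IsInterior G v := by unfold IsInterior; omega
  obtain ⟨hlt, h⟩ := sum_weight_eq hG hr hθ hN hcard hv'
  have h4 := degree_eq_card_children hG (ne_root hr hv')
  have := ratio_sum_lt hθ hN (size G r) (one_le_size r) (children G r v) (by omega) hlt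
  linarith

end Bounds

lemma sum_neighbor_comm (G : SimpleGraph V) (F : V → V → ℝ) :
    ∑ v, ∑ w ∈ G.neighborFinset v, F v w = ∑ v, ∑ w ∈ G.neighborFinset v, F w v := by
  apply Finset.sum_comm'
  simp [G.adj_comm]

/-- For arbitrary edge coefficients `a`, the excess of an eigenvalue over `μ` splits into a
diagonal form and the defects of the edge inequalities. -/
lemma quad_identity (a : V → V → ℝ) {μ lam : ℝ} {f : V → ℝ}
    (hf : IsDirichletEigenpair G lam f) (hV : ∀ v, IsBoundary G v ∨ IsInterior G v) :
    (lam - μ) * ∑ v, f v ^ 2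
      = ∑ v, f v ^ 2 * (G.degree v - μ - ∑ w ∈ G.neighborFinset v, a v w)
        + (∑ v, ∑ w ∈ G.neighborFinset v,
            (a v w * f v ^ 2 + a w v * f w ^ 2 - 2 * (f v * f w))) / 2 := by
  have h1 : ∀ v, f v * lapApply G f v = lam * f v ^ 2 := by
    intro v
    rcases hV v with h | h
    · rw [hf.2.1 v h]; ring
    · rw [hf.2.2 v h]; ring
  have h2 : lam * ∑ v, f v ^ 2
      = ∑ v, G.degree v * f v ^ 2 - ∑ v, ∑ w ∈ G.neighborFinset v, f v * f w := by
    rw [Finset.mul_sum, ← Finset.sum_sub_distrib]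
    refine Finset.sum_congr rfl fun v _ => ?_
    rw [← h1, lapApply, ← Finset.mul_sum]
    ring
  have h3 := sum_neighbor_comm G (fun v w => a v w * f v ^ 2)
  have h4 : ∑ v, f v ^ 2 * (G.degree v - μ - ∑ w ∈ G.neighborFinset v, a v w)
      = ∑ v, G.degree v * f v ^ 2 - μ * ∑ v, f v ^ 2
        - ∑ v, ∑ w ∈ G.neighborFinset v, a v w * f v ^ 2 := by
    rw [Finset.mul_sum, ← Finset.sum_sub_distrib, ← Finset.sum_sub_distrib]
    refine Finset.sum_congr rfl fun v _ => ?_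
    rw [← Finset.sum_mul]
    ring
  simp only [Finset.sum_sub_distrib, Finset.sum_add_distrib, ← Finset.mul_sum]
  simp only [← Finset.mul_sum] at h2 h3 h4
  rw [h4]
  rw [← h3]
  linarith

lemma boundary_or_interior (hG : IsTreeWithBoundary G) (v : V) :
    IsBoundary G v ∨ IsInterior G v := by
  obtain ⟨hT, ⟨a, ha⟩, b, hb⟩ := hG
  have : Nontrivial V := ⟨a, b, ne_root hb ha⟩
  have h := hT.connected.preconnected.degree_pos_of_nontrivial v
  unfold IsBoundary IsInterior
  omega

/-- The edge inequality. Since `0⁻¹ = 0`, it needs `x * y = 0` when `a = 0`. -/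
lemma edge_nonneg {a x y : ℝ} (ha : 0 ≤ a) (h : a = 0 → x * y = 0) :
    0 ≤ a * x ^ 2 + a⁻¹ * y ^ 2 - 2 * (x * y) := by
  rcases ha.eq_or_lt with rfl | h0
  · rw [h rfl]; simp
  · have : a * x ^ 2 + a⁻¹ * y ^ 2 - 2 * (x * y) = a⁻¹ * (a * x - y) ^ 2 := by
      field_simp
      ring
    rw [this]
    positivity

/-- Every Dirichlet eigenvalue is at least that of the path with as many vertices, and larger
if some vertex has degree at least three. -/
theorem eigenvalue_bound (hG : IsTreeWithBoundary G) {N : ℕ} {θ : ℝ} (hθ : 0 < θ)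
    (hN : N * θ = Real.pi) (hcard : Fintype.card V = N + 1) {lam : ℝ} {f : V → ℝ}
    (hf : IsDirichletEigenpair G lam f) :
    2 - 2 * Real.cos θ ≤ lam ∧ ((∃ b, 3 ≤ G.degree b) → 2 - 2 * Real.cos θ < lam) := by
  have hV := boundary_or_interior hG
  obtain ⟨hT, -, r, hr⟩ := hG
  have hpos : 0 < ∑ v, f v ^ 2 := by
    obtain ⟨v, hv⟩ := Function.ne_iff.1 hf.1
    exact Finset.sum_pos' (fun _ _ => sq_nonneg _) ⟨v, Finset.mem_univ v, sq_pos_of_ne_zero hv⟩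
  have hid := quad_identity (weight G r θ) (μ := 2 - 2 * Real.cos θ) hf hV
  have hA : ∀ v, 0 ≤ f v ^ 2 * (G.degree v - (2 - 2 * Real.cos θ)
      - ∑ w ∈ G.neighborFinset v, weight G r θ v w) := by
    intro v
    rcases hV v with h | h
    · rw [hf.2.1 v h]; simp
    · have := sum_weight_le hT hr hθ hN hcard h
      exact mul_nonneg (sq_nonneg _) (by linarith)
  have hB : ∀ v, ∀ w ∈ G.neighborFinset v, 0 ≤ weight G r θ v w * f v ^ 2
      + weight G r θ w v * f w ^ 2 - 2 * (f v * f w) := by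
    intro v w hw
    rw [SimpleGraph.mem_neighborFinset] at hw
    rw [weight_symm hT r θ hw]
    refine edge_nonneg (weight_nonneg hT hθ hN hcard hw) fun h0 => ?_
    rcases hV v with h | h
    · rw [hf.2.1 v h, zero_mul]
    rcases hV w with hw2 | hw2
    · rw [hf.2.1 w hw2, mul_zero]
    exact absurd h0 (weight_pos hT hr hθ hN hcard hw h hw2).ne'
  have hA' := Finset.sum_nonneg fun v (_ : v ∈ univ) => hA v
  have hB' := Finset.sum_nonneg fun v (_ : v ∈ univ) => Finset.sum_nonneg (hB v)
  have hle : 2 - 2 * Real.cos θ ≤ lam := by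
    have : 0 ≤ (lam - (2 - 2 * Real.cos θ)) * ∑ v, f v ^ 2 := by rw [hid]; linarith
    have := nonneg_of_mul_nonneg_left this hpos
    linarith
  refine ⟨hle, fun ⟨b, hb⟩ => lt_of_le_of_ne hle fun heq => hf.1 ?_⟩
  rw [← heq, sub_self, zero_mul] at hid
  have hA0 := (Finset.sum_eq_zero_iff_of_nonneg fun v _ => hA v).1
    (by linarith : ∑ v, f v ^ 2 * ((G.degree v : ℝ) - (2 - 2 * Real.cos θ)
      - ∑ w ∈ G.neighborFinset v, weight G r θ v w) = 0)
  have hB0 := (Finset.sum_eq_zero_iff_of_nonneg fun v _ => Finset.sum_nonneg (hB v)).1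
    (by linarith : ∑ v, ∑ w ∈ G.neighborFinset v, (weight G r θ v w * f v ^ 2
      + weight G r θ w v * f w ^ 2 - 2 * (f v * f w)) = 0)
  have hfb : f b = 0 := by
    rcases mul_eq_zero.1 (hA0 b (Finset.mem_univ b)) with h | h
    · exact pow_eq_zero_iff two_ne_zero |>.1 h
    · have := sum_weight_lt hT hr hθ hN hcard hb
      linarith
  -- A zero at an interior vertex spreads to its neighbours.
  have hspread : ∀ v w, G.Adj v w → IsInterior G v → f v = 0 → f w = 0 := by
    intro v w hvw hv hfv
    rcases hV w with hw | hw
    · exact hf.2.1 w hw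
    have h := (Finset.sum_eq_zero_iff_of_nonneg (hB v)).1 (hB0 v (Finset.mem_univ v)) w
      ((G.mem_neighborFinset v w).2 hvw)
    have hp := weight_pos hT hr hθ hN hcard hvw.symm hw hv
    rw [hfv] at h
    have hw2 : weight G r θ w v * f w ^ 2 = 0 := by linarith
    rcases mul_eq_zero.1 hw2 with hsq | hsq
    · exact absurd hsq hp.ne'
    · exact pow_eq_zero_iff two_ne_zero |>.1 hsq
  -- The second conjunct lets the zero set pass through a boundary vertex, where `hspread` does
  -- not apply.
  have hall : ∀ v, G.Reachable b v →
      f v = 0 ∧ (IsBoundary G v → ∀ w, G.Adj v w → f w = 0) := by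
    intro v hv
    rw [SimpleGraph.reachable_iff_reflTransGen] at hv
    induction hv with
    | refl =>
      refine ⟨hfb, fun h => ?_⟩
      unfold IsBoundary at h
      omega
    | @tail v w _ hvw ih =>
      refine ⟨?_, fun hw u hwu => ?_⟩
      · rcases hV v with h | h
        · exact ih.2 h w hvw
        · exact hspread v w hvw h ih.1
      · obtain ⟨x, hx⟩ := Finset.card_eq_one.1 ((G.card_neighborFinset_eq_degree w).trans hw)
        have h1 : u ∈ G.neighborFinset w := (G.mem_neighborFinset w u).2 hwu
        have h2 : v ∈ G.neighborFinset w := (G.mem_neighborFinset w v).2 hvw.symm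
        rw [hx, Finset.mem_singleton] at h1 h2
        rw [h1, ← h2]
        exact ih.1
  funext v
  exact (hall v (hT.connected.preconnected b v)).1

/-! ### The Dirichlet spectrum is finite and nonempty -/

/-- The Dirichlet operator as a matrix indexed by the interior vertices. -/
def dirichletMatrix (G : SimpleGraph V) :
    Matrix {v // IsInterior G v} {v // IsInterior G v} ℝ :=
  fun i j => (if i = j then (G.degree i.1 : ℝ) else 0) - if G.Adj i.1 j.1 then 1 else 0

lemma dirichletMatrix_mulVec (f : V → ℝ) (hf : ∀ v, ¬ IsInterior G v → f v = 0)
    (i : {v // IsInterior G v}) :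
    Matrix.mulVec (dirichletMatrix G) (fun j => f j.1) i = lapApply G f i.1 := by
  have h1 : ∑ j : {v // IsInterior G v}, (if G.Adj i.1 j.1 then (1 : ℝ) else 0) * f j.1
      = ∑ w ∈ G.neighborFinset i.1, f w := by
    rw [← Finset.sum_subtype (univ.filter (fun v => IsInterior G v)) (by simp)
      (fun w => (if G.Adj i.1 w then (1 : ℝ) else 0) * f w), Finset.sum_filter_of_ne,
      G.neighborFinset_eq_filter, Finset.sum_filter]
    · exact Finset.sum_congr rfl fun w _ => by simp
    · intro w _ hw
      by_contra h
      exact hw (by rw [hf w h, mul_zero])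
  simp only [Matrix.mulVec, dotProduct, dirichletMatrix, sub_mul, Finset.sum_sub_distrib, h1,
    lapApply]
  simp

lemma dirichletMatrix_isHermitian (G : SimpleGraph V) : (dirichletMatrix G).IsHermitian := by
  ext i j
  simp only [Matrix.conjTranspose_apply, dirichletMatrix, star_trivial, G.adj_comm j.1 i.1]
  by_cases h : i = j
  · subst h; simp
  · simp [h, Ne.symm h]

lemma spectrum_finite (hV : ∀ v, IsBoundary G v ∨ IsInterior G v) :
    {μ : ℝ | ∃ f : V → ℝ, IsDirichletEigenpair G μ f}.Finite := by
  refine (Module.End.finite_hasEigenvalue (Matrix.toLin' (dirichletMatrix G))).subset ?_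
  rintro μ ⟨f, hf0, hfb, hfi⟩
  have hv0 : ∀ v, ¬ IsInterior G v → f v = 0 := fun v hv => hfb v ((hV v).resolve_right hv)
  refine Module.End.hasEigenvalue_of_hasEigenvector (x := fun j => f j.1) ⟨?_, ?_⟩
  · rw [Module.End.mem_eigenspace_iff]
    funext i
    rw [Matrix.toLin'_apply, dirichletMatrix_mulVec f hv0 i, hfi i.1 i.2]
    rfl
  · intro h
    apply hf0
    funext v
    by_cases hv : IsInterior G v
    · exact congrFun h ⟨v, hv⟩
    · exact hv0 v hv

lemma spectrum_nonempty (hI : ∃ v, IsInterior G v) :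
    {μ : ℝ | ∃ f : V → ℝ, IsDirichletEigenpair G μ f}.Nonempty := by
  obtain ⟨v₀, hv₀⟩ := hI
  have hH := dirichletMatrix_isHermitian G
  set x : {v // IsInterior G v} → ℝ := ⇑(hH.eigenvectorBasis ⟨v₀, hv₀⟩) with hx
  have hmul := hH.mulVec_eigenvectorBasis ⟨v₀, hv₀⟩
  rw [← hx] at hmul
  set f : V → ℝ := fun v => if h : IsInterior G v then x ⟨v, h⟩ else 0 with hf
  have hfx : (fun j : {v // IsInterior G v} => f j.1) = x := by
    funext j
    simp [hf, j.2]
  have hv0 : ∀ v, ¬ IsInterior G v → f v = 0 := fun v hv => by simp [hf, hv]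
  refine ⟨hH.eigenvalues ⟨v₀, hv₀⟩, f, ?_, ?_, ?_⟩
  · intro h0
    apply (hH.eigenvectorBasis.orthonormal.ne_zero ⟨v₀, hv₀⟩)
    ext j
    have := congrFun hfx j
    rw [h0] at this
    exact this.symm
  · intro v hv
    apply hv0
    unfold IsBoundary at hv
    unfold IsInterior
    omega
  · intro v hv
    have h := dirichletMatrix_mulVec f hv0 ⟨v, hv⟩
    rw [hfx, hmul] at h
    rw [← h]
    simp [hf, hv]

lemma dirichletLambda_mem (hG : IsTreeWithBoundary G) :
    ∃ f : V → ℝ, IsDirichletEigenpair G (dirichletLambda G) f :=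
  (spectrum_nonempty hG.2.1).csInf_mem (spectrum_finite (boundary_or_interior hG))

end Tree

/-! ### Paths -/

section Path

set_option linter.unusedSectionVars false

variable {V : Type*} [Fintype V] [DecidableEq V] {G : SimpleGraph V} {n : ℕ}

lemma adj_iff_of_iso (e : G ≃g SimpleGraph.pathGraph n) (v w : V) :
    G.Adj v w ↔ (e v).val + 1 = (e w).val ∨ (e w).val + 1 = (e v).val := by
  rw [← e.map_adj_iff, SimpleGraph.pathGraph_adj]

lemma neighbors_mid (e : G ≃g SimpleGraph.pathGraph n) {v : V} (h0 : 0 < (e v).val)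
    (h1 : (e v).val + 1 < n) :
    G.neighborFinset v = {e.symm ⟨(e v).val - 1, by omega⟩, e.symm ⟨(e v).val + 1, h1⟩} := by
  ext w
  rw [SimpleGraph.mem_neighborFinset, adj_iff_of_iso e, Finset.mem_insert, Finset.mem_singleton,
    RelIso.eq_symm_apply, RelIso.eq_symm_apply, Fin.ext_iff, Fin.ext_iff]
  simp only
  omega

lemma degree_mid (e : G ≃g SimpleGraph.pathGraph n) {v : V} (h0 : 0 < (e v).val)
    (h1 : (e v).val + 1 < n) : G.degree v = 2 := by
  rw [← SimpleGraph.card_neighborFinset_eq_degree, neighbors_mid e h0 h1, Finset.card_pair]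
  intro h
  have := congrArg Fin.val (e.symm.injective h)
  simp only at this
  omega

lemma degree_end (hn : 2 ≤ n) (e : G ≃g SimpleGraph.pathGraph n) {v : V}
    (h : (e v).val = 0 ∨ (e v).val + 1 = n) : G.degree v = 1 := by
  rw [← SimpleGraph.card_neighborFinset_eq_degree, Finset.card_eq_one]
  refine ⟨e.symm ⟨if (e v).val = 0 then 1 else (e v).val - 1, by split_ifs <;> omega⟩, ?_⟩
  ext w
  rw [SimpleGraph.mem_neighborFinset, adj_iff_of_iso e, Finset.mem_singleton,
    RelIso.eq_symm_apply, Fin.ext_iff]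
  simp only
  have := (e w).isLt
  split_ifs <;> omega

/-- On a path, `sin (k θ)` is a Dirichlet eigenfunction. -/
lemma path_eigenpair {N : ℕ} (hN2 : 2 ≤ N) {θ : ℝ} (hθ : 0 < θ) (hN : N * θ = Real.pi)
    (e : G ≃g SimpleGraph.pathGraph (N + 1)) :
    IsDirichletEigenpair G (2 - 2 * Real.cos θ) (fun v => Real.sin ((e v).val * θ)) := by
  refine ⟨fun h => ?_, fun v hv => ?_, fun v hv => ?_⟩
  · have := congrFun h (e.symm ⟨1, by omega⟩)
    simp only [RelIso.apply_symm_apply, Pi.zero_apply] at this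
    exact (sin_mul_pos (k := 1) hθ hN le_rfl (by omega)).ne' this
  · by_cases h0 : (e v).val = 0
    · simp [h0]
    by_cases h1 : (e v).val + 1 < N + 1
    · have := degree_mid e (Nat.pos_of_ne_zero h0) h1
      unfold IsBoundary at hv
      omega
    · have : (e v).val = N := by have := (e v).isLt; omega
      simp only [this, hN, Real.sin_pi]
  · have h0 : 0 < (e v).val := by
      by_contra h
      have := degree_end (by omega) e (v := v) (Or.inl (by omega))
      unfold IsInterior at hv
      omega
    have h1 : (e v).val + 1 < N + 1 := by
      by_contra h
      have := degree_end (by omega) e (v := v) (Or.inr (by have := (e v).isLt; omega))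
      unfold IsInterior at hv
      omega
    rw [lapApply, degree_mid e h0 h1, neighbors_mid e h0 h1, Finset.sum_pair]
    · simp only [RelIso.apply_symm_apply]
      rw [Nat.cast_sub h0]
      push_cast
      rw [sub_mul, add_mul, one_mul, Real.sin_add, Real.sin_sub]
      ring
    · intro h
      have := congrArg Fin.val (e.symm.injective h)
      simp only at this
      omega

lemma pathGraph_isTree (N : ℕ) : (SimpleGraph.pathGraph (N + 1)).IsTree := by
  have hc := SimpleGraph.pathGraph_connected N
  rw [SimpleGraph.isTree_iff_connected_and_card]
  refine ⟨hc, le_antisymm ?_ hc.card_vert_le_card_edgeSet_add_one⟩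
  have hsub : (SimpleGraph.pathGraph (N + 1)).edgeSet
      ⊆ Set.range (fun i : Fin N => s(i.castSucc, i.succ)) := by
    intro x
    induction x with | _ u v => ?_
    rw [SimpleGraph.mem_edgeSet, SimpleGraph.pathGraph_adj]
    rintro (h | h)
    · refine ⟨⟨u, by omega⟩, ?_⟩
      exact congrArg (fun x => s(u, x)) (Fin.ext h)
    · refine ⟨⟨v, by omega⟩, ?_⟩
      have hu : Fin.succ ⟨v.val, by omega⟩ = u := Fin.ext h
      exact Sym2.eq_swap.trans (congrArg (fun x => s(x, v)) hu)
  have h1 := Nat.card_mono (Set.finite_range _) hsub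
  have h2 : Nat.card (Set.range (fun i : Fin N => s(i.castSucc, i.succ))) ≤ Nat.card (Fin N) :=
    Finite.card_range_le _
  simp only [Nat.card_eq_fintype_card, Fintype.card_fin] at *
  omega

lemma pathGraph_isTreeWithBoundary {N : ℕ} (hN2 : 2 ≤ N) :
    IsTreeWithBoundary (SimpleGraph.pathGraph (N + 1)) := by
  refine ⟨pathGraph_isTree N, ⟨⟨1, by omega⟩, ?_⟩, ⟨0, ?_⟩⟩
  · exact (degree_mid (SimpleGraph.Iso.refl (G := SimpleGraph.pathGraph (N + 1)))
      (v := ⟨1, by omega⟩) Nat.one_pos (show 1 + 1 < N + 1 by omega)).ge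
  · exact degree_end (by omega) (SimpleGraph.Iso.refl (G := SimpleGraph.pathGraph (N + 1)))
      (v := 0) (Or.inl rfl)

/-- In a tree without branching vertices, vertices are determined by their distance to a leaf. -/
lemma dist_leaf_injective (hG : G.IsTree) {r : V} (hr : IsBoundary G r)
    (hdeg : ∀ v, G.degree v ≤ 2) : Function.Injective (G.dist r) := by
  have hchild : ∀ v, (children G r v).card ≤ 1 := by
    intro v
    by_cases hv : v = r
    · subst hv
      exact (Finset.card_filter_le _ _).trans_eq ((G.card_neighborFinset_eq_degree v).trans hr)
    · have := degree_eq_card_children hG hv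
      have := hdeg v
      omega
  have key : ∀ k v w, G.dist r v = k → G.dist r w = k → v = w := by
    intro k
    induction k with
    | zero =>
      intro v w hv hw
      rw [hG.connected.dist_eq_zero_iff] at hv hw
      rw [← hv, ← hw]
    | succ k ih =>
      intro v w hv hw
      obtain ⟨p, hvp, hp, -⟩ := exists_parent hG (r := r) (v := v) (by rintro rfl; simp at hv)
      obtain ⟨q, hwq, hq, -⟩ := exists_parent hG (r := r) (v := w) (by rintro rfl; simp at hw)
      obtain rfl := ih p q (by omega) (by omega)
      exact Finset.card_le_one.1 (hchild p) v (mem_children.2 ⟨hvp.symm, hp⟩) w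
        (mem_children.2 ⟨hwq.symm, hq⟩)
  exact fun v w h => key _ v w rfl h.symm

lemma iso_path_of_degree_le_two (hG : G.IsTree) {r : V} (hr : IsBoundary G r)
    (hdeg : ∀ v, G.degree v ≤ 2) :
    Nonempty (G ≃g SimpleGraph.pathGraph (Fintype.card V)) := by
  have hinj := dist_leaf_injective hG hr hdeg
  have hlt : ∀ v, G.dist r v < Fintype.card V := by
    intro v
    obtain ⟨p, hp, hl⟩ := hG.connected.exists_path_of_dist r v
    rw [← hl]
    exact hp.length_lt
  have hbij : Function.Bijective (fun v => (⟨G.dist r v, hlt v⟩ : Fin (Fintype.card V))) := by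
    rw [Fintype.bijective_iff_injective_and_card]
    exact ⟨fun v w h => hinj (congrArg Fin.val h), by simp⟩
  have hadj : ∀ v w, G.dist r v + 1 = G.dist r w → G.Adj v w := by
    intro v w h
    obtain ⟨p, hwp, hp, -⟩ := exists_parent hG (r := r) (v := w) (by rintro rfl; simp at h)
    obtain rfl : v = p := hinj (by omega)
    exact hwp.symm
  refine ⟨⟨Equiv.ofBijective _ hbij, ?_⟩⟩
  intro v w
  rw [SimpleGraph.pathGraph_adj]
  simp only [Equiv.ofBijective_apply]
  constructor
  · rintro (h | h)
    · exact hadj v w h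
    · exact (hadj w v h).symm
  · intro h
    rcases hG.dist_eq_dist_add_one_of_adj r h with h1 | h1 <;> omega

end Path

/-- **Theorem.** A tree `G` has the Faber-Krahn property in the class
`T^(n,·)` of all trees with boundary with `n` vertices (arbitrary number of
interior vertices) if and only if `G` is a path with `n` vertices; `G` is then
uniquely determined up to isomorphism. -/
theorem faberKrahn_allTrees (n : ℕ) (hn : 3 ≤ n)
    (G : SimpleGraph (Fin n)) (hG : IsTreeWithBoundary G) :
    (∀ G' : SimpleGraph (Fin n), IsTreeWithBoundary G' →
        dirichletLambda G ≤ dirichletLambda G')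
      ↔ Nonempty (G ≃g SimpleGraph.pathGraph n) := by
  obtain ⟨N, rfl⟩ : ∃ N, n = N + 1 := ⟨n - 1, by omega⟩
  have hN0 : (0 : ℝ) < N := by exact_mod_cast (by omega : 0 < N)
  set θ : ℝ := Real.pi / N with hθdef
  have hθ : 0 < θ := div_pos Real.pi_pos hN0
  have hN : N * θ = Real.pi := by rw [hθdef]; field_simp
  have hcard : Fintype.card (Fin (N + 1)) = N + 1 := Fintype.card_fin _
  have hupper : ∀ H : SimpleGraph (Fin (N + 1)), IsTreeWithBoundary H →
      Nonempty (H ≃g SimpleGraph.pathGraph (N + 1)) →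
      dirichletLambda H ≤ 2 - 2 * Real.cos θ := by
    rintro H hH ⟨e⟩
    exact csInf_le (spectrum_finite (boundary_or_interior hH)).bddBelow
      ⟨_, path_eigenpair (by omega) hθ hN e⟩
  constructor
  · intro h
    by_contra hnot
    have hb : ∃ b, 3 ≤ G.degree b := by
      by_contra! hdeg
      obtain ⟨hT, -, r, hr⟩ := hG
      have := iso_path_of_degree_le_two hT hr fun v => by have := hdeg v; omega
      rw [hcard] at this
      exact hnot this
    obtain ⟨f, hf⟩ := dirichletLambda_mem hG
    have h1 := (eigenvalue_bound hG hθ hN hcard hf).2 hb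
    have hP := pathGraph_isTreeWithBoundary (N := N) (by omega)
    have h2 := hupper _ hP ⟨SimpleGraph.Iso.refl⟩
    have h3 := h _ hP
    linarith
  · intro hiso G' hG'
    obtain ⟨f, hf⟩ := dirichletLambda_mem hG'
    exact (hupper G hG hiso).trans (eigenvalue_bound hG' hθ hN hcard hf).1

end FK
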